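/- (Truncation after random rotation yields an incoherent well-aligned basis.) Let A = M + N ∈ ℝ^{n×n} be symmetric, where M = UΛ_U Uᵀ has rank k with U ∈ ℝ^{n×k} orthonormal and N = (I − UUᵀ)A = VΛ_V Vᵀ. Let W ∈ ℝ^{n×k} be orthonormal with ‖Vᵀ W‖ ≤ 1/(16√k). Let O ∈ ℝ^{k×k} be a Haar-random orthogonal matrix, let μ' = √(8 μ(U) log(n)/n), let T be the matrix obtained from WO by replacing each entry with the nearest point of the interval [−μ', μ'], and let X be the orthonormal factor of the QR factorization of T. Then with probability at least 99/100: ‖Vᵀ X‖_F ≤ 1/4 and μ(X) ≤ 32 μ(U) log n. -/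

import Mathlib

/-!
The comparison matrix is the projection `B = U Uᵀ W O` of `W O` onto the column space of `U`. Since
`W - U Uᵀ W = V Vᵀ W`, the hypothesis on `‖Vᵀ W‖` gives `‖W O - B‖_F ≤ 1/16`.

If all entries of `B` lie in `[-μ', μ']`, entrywise clamping `T` of `W O` satisfies
`‖T - B‖_F ≤ 1/16` and `‖T - W O‖_F ≤ 1/16`. The second bound keeps the singular values of `T`, hence
of `R` in `T = X R`, above `1/2`; the first one bounds `‖Vᵀ T‖_F = ‖Vᵀ (T - B)‖_F`. Thus
`‖Vᵀ X‖_F ≤ 2 / 16`, and rows of `X` have at most twice the length of rows of `T`, which is at most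
`√k μ'` (`deterministic_part`).

The rows of `U Uᵀ W` are no longer than those of `U`. An entry of `B` is a linear form `w` in a column
of a Haar-random matrix, and such a form is sub-Gaussian with variance proxy `‖w‖² / k`
(`haar_mgf`): by invariance `w` may be replaced by any vector `(‖w‖ / √k) ε` with signs `ε`, and
averaging over `ε` leaves a product of hyperbolic cosines. A Chernoff and union bound
(`haar_tail`, `box_event`) then shows that all entries of `B` are at most `μ'` with probability
at least `99/100`.
-/


open Matrix MeasureTheory

instance matrixMeasurableSpace {m n : Type*} : MeasurableSpace (Matrix m n ℝ) :=
  show MeasurableSpace (m → n → ℝ) from inferInstance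

/-- The spectral (operator) norm of a real matrix. -/
noncomputable def specNorm {m n : Type*} [Fintype m] [Fintype n] [DecidableEq n]
    (A : Matrix m n ℝ) : ℝ :=
  ‖LinearMap.toContinuousLinearMap (Matrix.toEuclideanLin A)‖

/-- The Frobenius norm. -/
noncomputable def frobNorm {m n : Type*} [Fintype m] [Fintype n] (B : Matrix m n ℝ) : ℝ :=
  Real.sqrt (∑ i, ∑ j, (B i j)^2)

/-- The coherence `μ(X) = max_i (n/m) ‖e_iᵀ X‖²` of an `n × m` matrix. -/
noncomputable def coher {n : ℕ} {m : Type*} [Fintype m] (X : Matrix (Fin n) m ℝ) : ℝ :=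
  ⨆ i : Fin n, ((n : ℝ) / (Fintype.card m)) * ∑ j, (X i j)^2

/-- `ν` is the Haar probability measure on the orthogonal group `O(k)`, viewed as a
measure on `k × k` matrices: it is a probability measure carried by the orthogonal
matrices and invariant under left translation by any orthogonal matrix. -/
structure IsHaarOrthogonal {k : ℕ} (ν : Measure (Matrix (Fin k) (Fin k) ℝ)) : Prop where
  prob : IsProbabilityMeasure ν
  orth : ∀ᵐ O ∂ν, Oᵀ * O = 1
  left_invariant : ∀ Q : Matrix (Fin k) (Fin k) ℝ, Qᵀ * Q = 1 →
    Measure.map (fun O => Q * O) ν = ν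

/-- Entrywise truncation of a matrix to the interval `[-c, c]`. -/
def truncate {m k : Type*} (c : ℝ) (B : Matrix m k ℝ) : Matrix m k ℝ :=
  Matrix.of fun i j => max (-c) (min c (B i j))

/-! ### Sub-Gaussian tails for Haar-random orthogonal matrices -/

/-- Vectors of equal length are related by an orthogonal matrix, here the Householder reflection
along `u - a`. -/
theorem exists_reflection {k : ℕ} (u a : Fin k → ℝ) (h : u ⬝ᵥ u = a ⬝ᵥ a) :
    ∃ H : Matrix (Fin k) (Fin k) ℝ, Hᵀ * H = 1 ∧ u ᵥ* H = a := by
  by_cases hua : u = a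
  · exact ⟨1, by simp, by simpa using hua⟩
  set z := u - a with hz
  have hz0 : z ⬝ᵥ z ≠ 0 := by
    rw [Ne, dotProduct_self_eq_zero]
    exact sub_ne_zero.mpr hua
  have huz : z ⬝ᵥ z = 2 * (u ⬝ᵥ z) := by
    have := dotProduct_comm a u
    simp only [hz, sub_dotProduct, dotProduct_sub]
    linarith
  refine ⟨1 - (2 / (z ⬝ᵥ z)) • vecMulVec z z, ?_, ?_⟩
  · have hT : (1 - (2 / (z ⬝ᵥ z)) • vecMulVec z z)ᵀ = 1 - (2 / (z ⬝ᵥ z)) • vecMulVec z z := by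
      rw [transpose_sub, transpose_smul, transpose_one, transpose_vecMulVec]
    have h2 : vecMulVec z z * vecMulVec z z = (z ⬝ᵥ z) • vecMulVec z z := by
      rw [vecMulVec_mul_vecMulVec, vecMulVec_smul]
    rw [hT, sub_mul, mul_sub, mul_sub, smul_mul_smul_comm, h2, smul_smul]
    simp only [mul_one, one_mul]
    have : 2 / (z ⬝ᵥ z) * (2 / (z ⬝ᵥ z)) * (z ⬝ᵥ z) = 2 / (z ⬝ᵥ z) + 2 / (z ⬝ᵥ z) := by
      field_simp; norm_num
    rw [this, add_smul]
    abel
  · rw [vecMul_sub, vecMul_one, vecMul_smul, vecMul_vecMulVec, smul_smul]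
    have : 2 / (z ⬝ᵥ z) * (u ⬝ᵥ z) = 1 := by
      rw [div_mul_eq_mul_div, ← huz, div_self hz0]
    rw [this, one_smul, hz]
    abel

/-- The moment generating function of a Rademacher sum `r ∑ ± x_l` with `‖x‖ = 1` (summed, rather
than averaged, over the `2 ^ k` sign patterns) is sub-Gaussian. -/
theorem sum_signs_exp {k : ℕ} (r : ℝ) (x : Fin k → ℝ) (hx : x ⬝ᵥ x = 1) :
    ∑ ε : Fin k → Bool, Real.exp ((fun l => r * (if ε l then 1 else -1)) ⬝ᵥ x)
      ≤ 2 ^ k * Real.exp (r ^ 2 / 2) := by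
  have h1 : ∀ ε : Fin k → Bool, Real.exp ((fun l => r * (if ε l then 1 else -1)) ⬝ᵥ x)
      = ∏ l, Real.exp (r * (if ε l then 1 else -1) * x l) := fun ε => by
    rw [dotProduct, Real.exp_sum]
  simp_rw [h1]
  have h2 := Finset.prod_univ_sum (fun _ : Fin k => (Finset.univ : Finset Bool))
    (fun l b => Real.exp (r * (if b then 1 else -1) * x l))
  rw [Fintype.piFinset_univ] at h2
  rw [← h2]
  calc _ ≤ ∏ l, 2 * Real.exp ((r * x l) ^ 2 / 2) := by
        refine Finset.prod_le_prod (fun l _ => by positivity) fun l _ => ?_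
        have := Real.cosh_le_exp_half_sq (r * x l)
        rw [Real.cosh_eq] at this
        simp only [Fintype.sum_bool, if_true, Bool.false_eq_true, if_false, mul_one, mul_neg,
          neg_mul]
        linarith
    _ = _ := by
        rw [Finset.prod_mul_distrib, ← Real.exp_sum]
        simp only [Finset.prod_const, Finset.card_univ, Fintype.card_fin]
        congr 2
        rw [← Finset.sum_div]
        congr 1
        simp_rw [mul_pow]
        rw [← Finset.mul_sum]
        simp only [dotProduct, ← pow_two] at hx
        rw [hx, mul_one]

theorem orth_col {k : ℕ} {O : Matrix (Fin k) (Fin k) ℝ} (h : Oᵀ * O = 1) (j : Fin k) :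
    (fun l => O l j) ⬝ᵥ (fun l => O l j) = 1 := by
  have := congrFun (congrFun h j) j
  rwa [Matrix.mul_apply, Matrix.one_apply_eq] at this

theorem measurable_vecMul_apply {k : ℕ} (w : Fin k → ℝ) (j : Fin k) :
    Measurable fun O : Matrix (Fin k) (Fin k) ℝ => (w ᵥ* O) j := by
  have h : ∀ l : Fin k, Measurable fun O : Matrix (Fin k) (Fin k) ℝ => O l j := fun l =>
    (measurable_pi_apply j).comp (measurable_pi_apply (X := fun _ : Fin k => Fin k → ℝ) l)
  simp only [vecMul, dotProduct]
  exact Finset.measurable_sum _ fun l _ => (h l).const_mul _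

theorem measurable_mul_left {k : ℕ} (Q : Matrix (Fin k) (Fin k) ℝ) :
    Measurable fun O : Matrix (Fin k) (Fin k) ℝ => Q * O :=
  measurable_pi_lambda _ fun i => measurable_pi_lambda _ fun j =>
    measurable_vecMul_apply (fun l => Q i l) j

/-- A linear form in a column of a Haar-random orthogonal matrix has a sub-Gaussian moment
generating function with variance proxy `‖w‖² / k`. By left invariance `w` may be replaced by any
vector of the same length, in particular by `(‖w‖ / √k) ε` for every sign vector `ε`; averaging over
`ε` first reduces to a Rademacher sum over a unit vector. -/
theorem haar_mgf {k : ℕ} (hk : 1 ≤ k) {ν : Measure (Matrix (Fin k) (Fin k) ℝ)}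
    (hν : IsHaarOrthogonal ν) (w : Fin k → ℝ) (j : Fin k) :
    ∫⁻ O, ENNReal.ofReal (Real.exp ((w ᵥ* O) j)) ∂ν
      ≤ ENNReal.ofReal (Real.exp ((w ⬝ᵥ w) / k / 2)) := by
  have := hν.prob
  have hk0 : (0 : ℝ) < k := by exact_mod_cast hk
  have hww : 0 ≤ w ⬝ᵥ w := Finset.sum_nonneg fun i _ => mul_self_nonneg _
  set r := Real.sqrt ((w ⬝ᵥ w) / k) with hr
  have hr2 : r ^ 2 = (w ⬝ᵥ w) / k := Real.sq_sqrt (by positivity)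
  have hmeas : ∀ v : Fin k → ℝ, Measurable fun O : Matrix (Fin k) (Fin k) ℝ =>
      ENNReal.ofReal (Real.exp ((v ᵥ* O) j)) := fun v =>
    (Real.measurable_exp.comp (measurable_vecMul_apply v j)).ennreal_ofReal
  set a : (Fin k → Bool) → Fin k → ℝ := fun ε l => r * (if ε l then 1 else -1) with ha
  have hinv : ∀ ε, ∫⁻ O, ENNReal.ofReal (Real.exp ((a ε ᵥ* O) j)) ∂ν =
      ∫⁻ O, ENNReal.ofReal (Real.exp ((w ᵥ* O) j)) ∂ν := by
    intro ε
    have haa : w ⬝ᵥ w = a ε ⬝ᵥ a ε := by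
      have : ∀ l, a ε l * a ε l = r ^ 2 := fun l => by
        simp only [ha]; split_ifs <;> ring
      simp only [dotProduct, this] at hr2 ⊢
      rw [hr2]
      simp
      field_simp
    obtain ⟨H, hH, hwH⟩ := exists_reflection w (a ε) haa
    conv_rhs => rw [← hν.left_invariant H hH]
    rw [lintegral_map (hmeas w) (measurable_mul_left H)]
    simp_rw [← vecMul_vecMul, hwH]
  have hsum : ∑ ε, ∫⁻ O, ENNReal.ofReal (Real.exp ((a ε ᵥ* O) j)) ∂ν
      ≤ ENNReal.ofReal (2 ^ k * Real.exp (r ^ 2 / 2)) := by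
    rw [← lintegral_finsetSum _ fun ε _ => hmeas (a ε)]
    calc _ ≤ ∫⁻ _, ENNReal.ofReal (2 ^ k * Real.exp (r ^ 2 / 2)) ∂ν := by
          refine lintegral_mono_ae ?_
          filter_upwards [hν.orth] with O hO
          rw [← ENNReal.ofReal_sum_of_nonneg fun _ _ => (Real.exp_pos _).le]
          exact ENNReal.ofReal_le_ofReal (sum_signs_exp r (fun l => O l j) (orth_col hO j))
      _ = _ := by simp
  simp_rw [hinv] at hsum
  rw [Finset.sum_const, nsmul_eq_mul, ENNReal.ofReal_mul (by positivity), hr2] at hsum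
  have h2k : ((Finset.univ : Finset (Fin k → Bool)).card : ENNReal) = ENNReal.ofReal (2 ^ k) := by
    simp [Finset.card_univ, ENNReal.ofReal_pow]
  rw [h2k] at hsum
  exact (ENNReal.mul_le_mul_iff_right (by simp) (by simp)).mp hsum

/-- One-sided Chernoff bound deduced from `haar_mgf`. -/
theorem haar_tail_one {k : ℕ} (hk : 1 ≤ k) {ν : Measure (Matrix (Fin k) (Fin k) ℝ)}
    (hν : IsHaarOrthogonal ν) (w : Fin k → ℝ) (j : Fin k) {v c : ℝ} (hv : 0 < v) (hc : 0 ≤ c)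
    (hw : w ⬝ᵥ w ≤ k * v) :
    ν {O | c < (w ᵥ* O) j} ≤ ENNReal.ofReal (Real.exp (-(c ^ 2 / (2 * v)))) := by
  have hk0 : (0 : ℝ) < k := by exact_mod_cast hk
  -- `c / v` is the optimal exponent in the Chernoff bound
  have h := haar_mgf hk hν ((c / v) • w) j
  have hle : ENNReal.ofReal (Real.exp (c / v * c)) * ν {O | c < (w ᵥ* O) j} ≤
      ENNReal.ofReal (Real.exp (c ^ 2 / (2 * v))) := by
    calc _ ≤ ENNReal.ofReal (Real.exp (c / v * c)) *
          ν {O | ENNReal.ofReal (Real.exp (c / v * c)) ≤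
            ENNReal.ofReal (Real.exp ((((c / v) • w) ᵥ* O) j))} := by
          gcongr
          intro hO
          rw [smul_vecMul, Pi.smul_apply, smul_eq_mul]
          gcongr
      _ ≤ _ := mul_meas_ge_le_lintegral
          (Real.measurable_exp.comp (measurable_vecMul_apply _ j)).ennreal_ofReal _
      _ ≤ _ := h
      _ ≤ _ := by
          apply ENNReal.ofReal_le_ofReal
          apply Real.exp_le_exp.mpr
          rw [smul_dotProduct, dotProduct_smul, smul_eq_mul, smul_eq_mul, div_div,
            div_le_div_iff₀ (by positivity) (by positivity)]
          have : c / v * (c / v * w ⬝ᵥ w) ≤ c / v * (c / v * (k * v)) := by gcongr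
          calc _ ≤ c / v * (c / v * (k * v)) * (2 * v) := by gcongr
            _ = _ := by field_simp
  have hE : ENNReal.ofReal (Real.exp (-(c / v * c))) * ENNReal.ofReal (Real.exp (c / v * c)) = 1 := by
    rw [← ENNReal.ofReal_mul (Real.exp_pos _).le, ← Real.exp_add]
    simp
  calc ν {O | c < (w ᵥ* O) j}
      = ENNReal.ofReal (Real.exp (-(c / v * c))) *
        (ENNReal.ofReal (Real.exp (c / v * c)) * ν {O | c < (w ᵥ* O) j}) := by
        rw [← mul_assoc, hE, one_mul]
    _ ≤ ENNReal.ofReal (Real.exp (-(c / v * c))) *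
        ENNReal.ofReal (Real.exp (c ^ 2 / (2 * v))) := by gcongr
    _ = _ := by
        rw [← ENNReal.ofReal_mul (Real.exp_pos _).le, ← Real.exp_add]
        congr 2
        field_simp
        ring

theorem haar_tail {k : ℕ} (hk : 1 ≤ k) {ν : Measure (Matrix (Fin k) (Fin k) ℝ)}
    (hν : IsHaarOrthogonal ν) (w : Fin k → ℝ) (j : Fin k) {v c : ℝ} (hv : 0 < v) (hc : 0 ≤ c)
    (hw : w ⬝ᵥ w ≤ k * v) :
    ν {O | c < |(w ᵥ* O) j|} ≤ ENNReal.ofReal (2 * Real.exp (-(c ^ 2 / (2 * v)))) := by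
  have hsub : {O | c < |(w ᵥ* O) j|} ⊆
      {O : Matrix (Fin k) (Fin k) ℝ | c < (w ᵥ* O) j} ∪ {O | c < ((-w) ᵥ* O) j} := by
    intro O hO
    rw [Set.mem_ofPred_eq, lt_abs] at hO
    simpa [neg_vecMul] using hO
  refine (measure_mono hsub).trans ((measure_union_le _ _).trans ?_)
  rw [two_mul, ENNReal.ofReal_add (Real.exp_pos _).le (Real.exp_pos _).le]
  exact add_le_add (haar_tail_one hk hν w j hv hc hw)
    (haar_tail_one hk hν (-w) j hv hc (by simpa using hw))

/-! ### Frobenius norms, coherence and truncation -/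

theorem dot_self_nonneg {m : Type*} [Fintype m] (x : m → ℝ) : 0 ≤ x ⬝ᵥ x :=
  Finset.sum_nonneg fun _ _ => mul_self_nonneg _

theorem dot_sq_le {m : Type*} [Fintype m] (x y : m → ℝ) :
    (x ⬝ᵥ y) ^ 2 ≤ (x ⬝ᵥ x) * (y ⬝ᵥ y) := by
  simpa [dotProduct, pow_two] using Finset.sum_mul_sq_le_sq_mul_sq Finset.univ x y

theorem mulVec_dot_mulVec {m n : Type*} [Fintype m] [Fintype n] (P : Matrix m n ℝ) (x : n → ℝ) :
    (P *ᵥ x) ⬝ᵥ (P *ᵥ x) = x ⬝ᵥ ((Pᵀ * P) *ᵥ x) := by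
  rw [← mulVec_mulVec, dotProduct_mulVec x, vecMul_transpose]

/-- If every singular value of a square matrix `R` is at least `1/2`, the same lower bound holds for
its action on row vectors. -/
theorem vecMul_dot_le {k : ℕ} {R : Matrix (Fin k) (Fin k) ℝ}
    (hR : ∀ x, x ⬝ᵥ x ≤ 4 * ((R *ᵥ x) ⬝ᵥ (R *ᵥ x))) (y : Fin k → ℝ) :
    y ⬝ᵥ y ≤ 4 * ((y ᵥ* R) ⬝ᵥ (y ᵥ* R)) := by
  have hinj : Function.Injective R.mulVec := by
    intro a b hab
    have h := hR (a - b)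
    have h0 : R *ᵥ (a - b) = 0 := by rw [mulVec_sub]; exact sub_eq_zero.mpr hab
    rw [h0] at h
    have h1 : (a - b) ⬝ᵥ (a - b) = 0 := le_antisymm (by simpa using h) (dot_self_nonneg _)
    exact sub_eq_zero.mp (dotProduct_self_eq_zero.mp h1)
  have hunit := mulVec_injective_iff_isUnit.mp hinj
  obtain ⟨x, hx⟩ := mulVec_surjective_iff_isUnit.mpr hunit y
  have h1 : y ⬝ᵥ y = (y ᵥ* R) ⬝ᵥ x := by
    rw [← dotProduct_mulVec]; exact congrArg _ hx.symm
  have h2 := dot_sq_le (y ᵥ* R) x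
  rw [← h1] at h2
  have h3 := hR x
  have hx' : R *ᵥ x = y := hx
  rw [hx'] at h3
  have h4 := dot_self_nonneg (y ᵥ* R)
  rcases (dot_self_nonneg y).eq_or_lt with h5 | h5
  · rw [← h5]; positivity
  · have : (y ⬝ᵥ y) * (y ⬝ᵥ y) ≤ (4 * ((y ᵥ* R) ⬝ᵥ (y ᵥ* R))) * (y ⬝ᵥ y) := by nlinarith
    exact le_of_mul_le_mul_right this h5

theorem mulVec_dot_le_frob {m n : Type*} [Fintype m] [Fintype n] (D : Matrix m n ℝ) (x : n → ℝ) :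
    (D *ᵥ x) ⬝ᵥ (D *ᵥ x) ≤ (∑ i, ∑ j, D i j ^ 2) * (x ⬝ᵥ x) := by
  rw [Finset.sum_mul]
  refine Finset.sum_le_sum fun i _ => ?_
  have := dot_sq_le (D i) x
  rw [← pow_two]
  refine this.trans_eq ?_
  simp [dotProduct, pow_two]

theorem frob_eq_cols {m n : Type*} [Fintype m] [Fintype n] (D : Matrix m n ℝ) :
    ∑ i, ∑ j, D i j ^ 2 = ∑ j, D.col j ⬝ᵥ D.col j := by
  rw [Finset.sum_comm]; simp [dotProduct, pow_two]

theorem frob_eq_rows {m n : Type*} [Fintype m] [Fintype n] (D : Matrix m n ℝ) :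
    ∑ i, ∑ j, D i j ^ 2 = ∑ i, D i ⬝ᵥ D i := by
  simp [dotProduct, pow_two]

/-- Pythagoras for the complementary projections `U Uᵀ` and `V Vᵀ`. -/
theorem transpose_mulVec_dot {n k l : ℕ} {U : Matrix (Fin n) (Fin k) ℝ}
    {V : Matrix (Fin n) (Fin l) ℝ} (hfull : U * Uᵀ + V * Vᵀ = 1) (d : Fin n → ℝ) :
    (Uᵀ *ᵥ d) ⬝ᵥ (Uᵀ *ᵥ d) + (Vᵀ *ᵥ d) ⬝ᵥ (Vᵀ *ᵥ d) = d ⬝ᵥ d := by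
  rw [mulVec_dot_mulVec, mulVec_dot_mulVec, transpose_transpose, transpose_transpose,
    ← dotProduct_add, ← add_mulVec, hfull, one_mulVec]

theorem frob_transpose_mul_le {n k l p : ℕ} {U : Matrix (Fin n) (Fin k) ℝ}
    {V : Matrix (Fin n) (Fin l) ℝ} (hfull : U * Uᵀ + V * Vᵀ = 1) (D : Matrix (Fin n) (Fin p) ℝ) :
    ∑ i, ∑ j, (Vᵀ * D) i j ^ 2 ≤ ∑ i, ∑ j, D i j ^ 2 := by
  rw [frob_eq_cols, frob_eq_cols]
  refine Finset.sum_le_sum fun j _ => ?_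
  have h : (Vᵀ * D).col j = Vᵀ *ᵥ D.col j := rfl
  have := transpose_mulVec_dot hfull (D.col j)
  have := dot_self_nonneg (Uᵀ *ᵥ D.col j)
  rw [h]; linarith

theorem frob_le_spec {l k : ℕ} (P : Matrix (Fin l) (Fin k) ℝ) :
    ∑ i, ∑ j, P i j ^ 2 ≤ k * specNorm P ^ 2 := by
  rw [frob_eq_cols]
  calc _ ≤ ∑ _j : Fin k, specNorm P ^ 2 := by
        refine Finset.sum_le_sum fun j _ => ?_
        have h := (LinearMap.toContinuousLinearMap (Matrix.toEuclideanLin P)).le_opNorm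
          (EuclideanSpace.single j 1)
        have h2 : ‖(LinearMap.toContinuousLinearMap (Matrix.toEuclideanLin P))
            (EuclideanSpace.single j 1)‖ ^ 2 = P.col j ⬝ᵥ P.col j := by
          rw [EuclideanSpace.norm_sq_eq]
          simp [dotProduct, Matrix.toLpLin_apply, pow_two]
        rw [← h2, specNorm]
        simp only [PiLp.norm_single, norm_one, mul_one] at h
        gcongr
    _ = _ := by simp

theorem le_coher {n k : ℕ} (hk : 1 ≤ k) (hn : 2 ≤ n) (U : Matrix (Fin n) (Fin k) ℝ) (i : Fin n) :
    U i ⬝ᵥ U i ≤ k * (coher U / n) := by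
  have hk0 : (0 : ℝ) < k := by exact_mod_cast hk
  have hn0 : (0 : ℝ) < n := by positivity
  have h := le_ciSup (Set.finite_range fun i : Fin n =>
    ((n : ℝ) / (Fintype.card (Fin k))) * ∑ j, (U i j)^2).bddAbove i
  rw [← coher.eq_def] at h
  simp only [Fintype.card_fin] at h
  have h2 : U i ⬝ᵥ U i = ∑ j, U i j ^ 2 := by simp [dotProduct, pow_two]
  rw [h2]
  calc ∑ j, U i j ^ 2 = k * ((n / k * ∑ j, U i j ^ 2) / n) := by field_simp
    _ ≤ _ := by gcongr

/-- The rows of an orthonormal `U` have total squared length `k`, so some row is nonzero. -/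
theorem coher_pos {n k : ℕ} (hk : 1 ≤ k) (hn : 2 ≤ n) {U : Matrix (Fin n) (Fin k) ℝ}
    (hU : Uᵀ * U = 1) : 0 < coher U := by
  have hk0 : (0 : ℝ) < k := by exact_mod_cast hk
  have hn0 : (0 : ℝ) < n := by positivity
  have h1 : ∑ i, U i ⬝ᵥ U i = k := by
    rw [← frob_eq_rows, frob_eq_cols]
    have : ∀ j, U.col j ⬝ᵥ U.col j = 1 := fun j => by
      have := congrFun (congrFun hU j) j
      rwa [Matrix.mul_apply, Matrix.one_apply_eq] at this
    simp [this]
  have h2 : ∑ i, U i ⬝ᵥ U i ≤ ∑ _i : Fin n, k * (coher U / n) :=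
    Finset.sum_le_sum fun i _ => le_coher hk hn U i
  rw [h1] at h2
  have h3 : ∑ _i : Fin n, (k : ℝ) * (coher U / n) = k * coher U := by
    simp; field_simp
  rw [h3] at h2
  nlinarith

/-- Clamping `w` to `[-c, c]` moves it by at most its distance to any point `b` of the interval, and
does not increase that distance. -/
theorem abs_clamp_sub_le {c b w : ℝ} (hb : |b| ≤ c) :
    |max (-c) (min c w) - b| ≤ |w - b| ∧ |max (-c) (min c w) - w| ≤ |w - b| := by
  obtain ⟨h1, h2⟩ := abs_le.mp hb
  rcases le_total c w with h | h
  · rw [min_eq_left h, max_eq_right (by linarith), abs_of_nonneg (by linarith : 0 ≤ w - b),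
      abs_of_nonneg (by linarith : 0 ≤ c - b), abs_of_nonpos (by linarith : c - w ≤ 0)]
    constructor <;> linarith
  · rw [min_eq_right h]
    rcases le_total (-c) w with h' | h'
    · rw [max_eq_right h']; simp
    · rw [max_eq_left h', abs_of_nonpos (by linarith : w - b ≤ 0),
        abs_of_nonpos (by linarith : -c - b ≤ 0), abs_of_nonneg (by linarith : 0 ≤ -c - w)]
      constructor <;> linarith

theorem abs_clamp_le {c : ℝ} (hc : 0 ≤ c) (w : ℝ) : |max (-c) (min c w)| ≤ c :=
  abs_le.mpr ⟨le_max_left _ _, max_le (by linarith) (min_le_left _ _)⟩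

theorem frob_mul_orth {n k : ℕ} (D : Matrix (Fin n) (Fin k) ℝ) {O : Matrix (Fin k) (Fin k) ℝ}
    (hO : Oᵀ * O = 1) : ∑ i, ∑ j, (D * O) i j ^ 2 = ∑ i, ∑ j, D i j ^ 2 := by
  rw [frob_eq_rows, frob_eq_rows]
  refine Finset.sum_congr rfl fun i _ => ?_
  have h : (D * O) i = Oᵀ *ᵥ D i := by
    rw [mulVec_transpose]; rfl
  rw [h, mulVec_dot_mulVec, transpose_transpose, mul_eq_one_comm.mp hO, one_mulVec]

/-- If `U Uᵀ W O` has all entries in `[-c, c]`, then truncating `W O` moves it by at most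
`‖W - U Uᵀ W‖_F ≤ 1/16`, so the triangular factor `R` has smallest singular value at least `1/2`, and
both `‖Vᵀ T‖_F` and the row norms of `T` at most double on passing to the orthonormal factor. -/
theorem deterministic_part {n k : ℕ} (hn : 2 ≤ n) (hk : 1 ≤ k)
    {U : Matrix (Fin n) (Fin k) ℝ} {V : Matrix (Fin n) (Fin (n - k)) ℝ}
    (hV : Vᵀ * V = 1) (hUV : Uᵀ * V = 0)
    (hfull : U * Uᵀ + V * Vᵀ = 1)
    {W : Matrix (Fin n) (Fin k) ℝ} (hW : Wᵀ * W = 1)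
    (hWV : specNorm (Vᵀ * W) ≤ 1/(16 * Real.sqrt k))
    {O : Matrix (Fin k) (Fin k) ℝ} (hO : Oᵀ * O = 1) {c : ℝ} (hc : 0 ≤ c)
    (hbox : ∀ i j, |(U * (Uᵀ * W) * O) i j| ≤ c)
    {X : Matrix (Fin n) (Fin k) ℝ} (hX : Xᵀ * X = 1) {R : Matrix (Fin k) (Fin k) ℝ}
    (hT : truncate c (W * O) = X * R) :
    frobNorm (Vᵀ * X) ≤ 1/4 ∧ coher X ≤ 4 * n * c ^ 2 := by
  have hk0 : (0 : ℝ) < k := by exact_mod_cast hk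
  have hn0 : (0 : ℝ) < n := by positivity
  set B := U * (Uᵀ * W) * O with hB
  set T := truncate c (W * O) with hTdef
  have hTij : ∀ i j, T i j = max (-c) (min c ((W * O) i j)) := fun i j => rfl
  have hVW : ∑ i, ∑ j, (Vᵀ * W) i j ^ 2 ≤ 1 / 256 := by
    refine (frob_le_spec _).trans ?_
    have h0 : 0 ≤ specNorm (Vᵀ * W) := norm_nonneg _
    calc (k : ℝ) * specNorm (Vᵀ * W) ^ 2 ≤ k * (1/(16 * Real.sqrt k)) ^ 2 := by gcongr
      _ = 1 / 256 := by
        rw [div_pow, mul_pow, Real.sq_sqrt hk0.le]; field_simp; norm_num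
  have hWB : ∑ i, ∑ j, (W * O - B) i j ^ 2 ≤ 1 / 256 := by
    have h1 : W * O - B = V * (Vᵀ * W) * O := by
      have h : U * (Uᵀ * W) + V * (Vᵀ * W) = W := by
        rw [← Matrix.mul_assoc, ← Matrix.mul_assoc, ← Matrix.add_mul, hfull, Matrix.one_mul]
      rw [hB, ← Matrix.sub_mul, ← eq_sub_of_add_eq' h]
    rw [h1, frob_mul_orth _ hO, frob_eq_cols]
    refine le_trans (le_of_eq ?_) hVW
    rw [frob_eq_cols]
    refine Finset.sum_congr rfl fun j _ => ?_
    have : (V * (Vᵀ * W)).col j = V *ᵥ (Vᵀ * W).col j := rfl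
    rw [this, mulVec_dot_mulVec, hV, one_mulVec]
  have hTB : ∑ i, ∑ j, (T - B) i j ^ 2 ≤ 1 / 256 := by
    refine le_trans ?_ hWB
    refine Finset.sum_le_sum fun i _ => Finset.sum_le_sum fun j _ => sq_le_sq.mpr ?_
    exact (abs_clamp_sub_le (hbox i j)).1
  have hTW : ∑ i, ∑ j, (T - W * O) i j ^ 2 ≤ 1 / 256 := by
    refine le_trans ?_ hWB
    refine Finset.sum_le_sum fun i _ => Finset.sum_le_sum fun j _ => sq_le_sq.mpr ?_
    exact (abs_clamp_sub_le (hbox i j)).2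
  have hR : ∀ x, x ⬝ᵥ x ≤ 4 * ((R *ᵥ x) ⬝ᵥ (R *ᵥ x)) := by
    intro x
    have h1 : (R *ᵥ x) ⬝ᵥ (R *ᵥ x) = (T *ᵥ x) ⬝ᵥ (T *ᵥ x) := by
      rw [hT, ← mulVec_mulVec, mulVec_dot_mulVec X, hX, one_mulVec]
    have h2 : ((W * O) *ᵥ x) ⬝ᵥ ((W * O) *ᵥ x) = x ⬝ᵥ x := by
      rw [mulVec_dot_mulVec, transpose_mul, Matrix.mul_assoc, ← Matrix.mul_assoc Wᵀ, hW,
        Matrix.one_mul, hO, one_mulVec]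
    have h3 : ((T - W * O) *ᵥ x) ⬝ᵥ ((T - W * O) *ᵥ x) ≤ 1 / 256 * (x ⬝ᵥ x) :=
      (mulVec_dot_le_frob _ x).trans (mul_le_mul_of_nonneg_right hTW (dot_self_nonneg x))
    have h4 := dot_self_nonneg (T *ᵥ x + (T - W * O) *ᵥ x)
    have h5 : (W * O) *ᵥ x = T *ᵥ x - (T - W * O) *ᵥ x := by
      rw [sub_mulVec]; abel
    rw [h5] at h2
    have h6 := dotProduct_comm (T *ᵥ x) ((T - W * O) *ᵥ x)
    have h7 := dot_self_nonneg x
    rw [h1]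
    simp only [dotProduct_add, add_dotProduct, dotProduct_sub, sub_dotProduct] at h2 h4
    linarith
  have hrow := vecMul_dot_le hR
  constructor
  · have hVT : Vᵀ * X * R = Vᵀ * (T - B) := by
      have hVU : Vᵀ * U = 0 := by
        rw [← transpose_transpose U, ← transpose_mul, hUV, transpose_zero]
      rw [Matrix.mul_sub, hB, Matrix.mul_assoc, ← hT, Matrix.mul_assoc U, ← Matrix.mul_assoc Vᵀ U,
        hVU, Matrix.zero_mul, sub_zero]
    rw [frobNorm]
    apply Real.sqrt_le_iff.mpr ⟨by norm_num, ?_⟩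
    calc ∑ i, ∑ j, (Vᵀ * X) i j ^ 2 = ∑ i, (Vᵀ * X) i ⬝ᵥ (Vᵀ * X) i := frob_eq_rows _
      _ ≤ ∑ i, 4 * ((Vᵀ * X * R) i ⬝ᵥ (Vᵀ * X * R) i) :=
          Finset.sum_le_sum fun i _ => hrow _
      _ = 4 * ∑ i, ∑ j, (Vᵀ * (T - B)) i j ^ 2 := by
          rw [← Finset.mul_sum, hVT, frob_eq_rows]
      _ ≤ 4 * (1 / 256) := by
          have := frob_transpose_mul_le hfull (T - B)
          linarith
      _ ≤ (1/4) ^ 2 := by norm_num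
  · have : Nonempty (Fin n) := ⟨⟨0, by omega⟩⟩
    refine ciSup_le fun i => ?_
    have h1 : X i ⬝ᵥ X i ≤ 4 * (T i ⬝ᵥ T i) := by
      rw [hT]; exact hrow (X i)
    have h2 : T i ⬝ᵥ T i ≤ k * c ^ 2 := by
      calc T i ⬝ᵥ T i ≤ ∑ _j : Fin k, c ^ 2 := by
            refine Finset.sum_le_sum fun j _ => ?_
            rw [← pow_two, hTij, ← sq_abs]
            have := abs_clamp_le hc ((W * O) i j)
            gcongr
        _ = _ := by simp
    have h3 : ∑ j, X i j ^ 2 = X i ⬝ᵥ X i := by simp [dotProduct, pow_two]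
    rw [h3, Fintype.card_fin]
    calc (n : ℝ) / k * (X i ⬝ᵥ X i) ≤ n / k * (4 * (k * c ^ 2)) := by gcongr; linarith
      _ = _ := by field_simp

/-! ### The entries of the rotated projection -/

/-- Bessel's inequality for the orthonormal columns of `W`. -/
theorem bessel {n k : ℕ} {W : Matrix (Fin n) (Fin k) ℝ} (hW : Wᵀ * W = 1) (d : Fin n → ℝ) :
    (Wᵀ *ᵥ d) ⬝ᵥ (Wᵀ *ᵥ d) ≤ d ⬝ᵥ d := by
  have h1 : (W *ᵥ (Wᵀ *ᵥ d)) ⬝ᵥ (W *ᵥ (Wᵀ *ᵥ d)) = (Wᵀ *ᵥ d) ⬝ᵥ (Wᵀ *ᵥ d) := by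
    rw [mulVec_dot_mulVec W, hW, one_mulVec]
  have h2 : d ⬝ᵥ (W *ᵥ (Wᵀ *ᵥ d)) = (Wᵀ *ᵥ d) ⬝ᵥ (Wᵀ *ᵥ d) := by
    rw [dotProduct_mulVec d, mulVec_transpose]
  have h3 := dot_self_nonneg (d - W *ᵥ (Wᵀ *ᵥ d))
  have h4 := dotProduct_comm d (W *ᵥ (Wᵀ *ᵥ d))
  simp only [dotProduct_sub, sub_dotProduct] at h3
  linarith

theorem row_proj_le {n k : ℕ} {U W : Matrix (Fin n) (Fin k) ℝ} (hU : Uᵀ * U = 1)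
    (hW : Wᵀ * W = 1) (i : Fin n) :
    (U * (Uᵀ * W)) i ⬝ᵥ (U * (Uᵀ * W)) i ≤ U i ⬝ᵥ U i := by
  have h : (U * (Uᵀ * W)) i = Wᵀ *ᵥ (U *ᵥ U i) := by
    rw [mulVec_mulVec, ← vecMul_transpose, transpose_mul, transpose_transpose]; rfl
  rw [h]
  refine (bessel hW _).trans_eq ?_
  rw [mulVec_dot_mulVec, hU, one_mulVec]

theorem small_le_log {n : ℕ} (hn : 2 ≤ n) (hn' : n < 16) : (n : ℝ) ≤ 8 * Real.log n := by
  have hl := Real.log_two_gt_d9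
  have key : ∀ p : ℕ, 2 ^ p ≤ n → p * Real.log 2 ≤ Real.log n := fun p hp => by
    rw [← Real.log_pow]
    exact Real.log_le_log (by positivity) (by exact_mod_cast hp)
  rcases lt_or_ge n 4 with h | h
  · have h1 := key 1 (by omega)
    have : (n : ℝ) < 4 := by exact_mod_cast h
    push_cast at h1; linarith
  rcases lt_or_ge n 8 with h' | h'
  · have h1 := key 2 (by omega)
    have : (n : ℝ) < 8 := by exact_mod_cast h'
    push_cast at h1; linarith
  · have h1 := key 3 (by omega)
    have : (n : ℝ) < 16 := by exact_mod_cast hn'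
    push_cast at h1; linarith

/-- With probability at least `99/100` every entry of `G O` is at most `c` in absolute value, when
the rows of `G` have squared length at most `k v`. For `n < 16` this holds for every orthogonal `O`,
by Cauchy–Schwarz; for `n ≥ 16` the union bound over the `n k` entries costs
`2 n k / n ^ 4 ≤ 2 / n ^ 2 < 1/100`. -/
theorem box_event {n k : ℕ} (hn : 2 ≤ n) (hk : 1 ≤ k) (hkn : k ≤ n)
    {ν : Measure (Matrix (Fin k) (Fin k) ℝ)} (hν : IsHaarOrthogonal ν)
    (G : Matrix (Fin n) (Fin k) ℝ) {v c : ℝ} (hv : 0 < v) (hc : 0 ≤ c)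
    (hc2 : c ^ 2 = 8 * v * Real.log n) (hG : ∀ i, G i ⬝ᵥ G i ≤ k * v) :
    ν {O | ∃ i j, c < |(G * O) i j|} ≤ ENNReal.ofReal (1 / 100) := by
  have hn0 : (0 : ℝ) < n := by positivity
  have hkn' : (k : ℝ) ≤ n := by exact_mod_cast hkn
  rcases lt_or_ge n 16 with hs | hs
  · have h0 : ν {O | ∃ i j, c < |(G * O) i j|} = 0 := by
      refine measure_mono_null ?_ hν.orth
      rintro O ⟨i, j, hij⟩ hO
      refine absurd (abs_le_of_sq_le_sq' ?_ hc) fun h => (abs_le.mpr h).not_gt hij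
      have h1 := dot_sq_le (G i) (fun l => O l j)
      rw [orth_col hO j, mul_one] at h1
      have h2 : (G * O) i j = G i ⬝ᵥ fun l => O l j := rfl
      rw [h2]
      calc _ ≤ _ := h1
        _ ≤ k * v := hG i
        _ ≤ 8 * Real.log n * v := by
          have := small_le_log hn hs
          gcongr
          linarith
        _ = c ^ 2 := by rw [hc2]; ring
    rw [h0]; exact zero_le
  · have hexp : Real.exp (-(c ^ 2 / (2 * v))) = 1 / (n : ℝ) ^ 4 := by
      have : -(c ^ 2 / (2 * v)) = -((4 : ℕ) * Real.log n) := by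
        rw [hc2]; push_cast; field_simp; ring
      rw [this, Real.exp_neg, ← Real.log_pow, Real.exp_log (by positivity), one_div]
    have hsub : {O | ∃ i j, c < |(G * O) i j|} ⊆
        ⋃ p : Fin n × Fin k, {O : Matrix (Fin k) (Fin k) ℝ | c < |(G p.1 ᵥ* O) p.2|} := by
      rintro O ⟨i, j, hij⟩
      exact Set.mem_iUnion.mpr ⟨(i, j), hij⟩
    calc _ ≤ _ := measure_mono hsub
      _ ≤ ∑ p : Fin n × Fin k, ν {O | c < |(G p.1 ᵥ* O) p.2|} := measure_iUnion_fintype_le _ _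
      _ ≤ ∑ _p : Fin n × Fin k, ENNReal.ofReal (2 * (1 / (n : ℝ) ^ 4)) := by
          refine Finset.sum_le_sum fun p _ => ?_
          rw [← hexp]
          exact haar_tail hk hν (G p.1) p.2 hv hc (hG p.1)
      _ = ENNReal.ofReal (n * k * (2 * (1 / (n : ℝ) ^ 4))) := by
          rw [Finset.sum_const, nsmul_eq_mul, ENNReal.ofReal_mul (p := (n : ℝ) * k) (by positivity)]
          congr 1
          rw [Finset.card_univ, Fintype.card_prod, Fintype.card_fin, Fintype.card_fin,
            ← Nat.cast_mul, ENNReal.ofReal_natCast]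
      _ ≤ _ := by
          apply ENNReal.ofReal_le_ofReal
          have h16 : (16 : ℝ) ≤ n := by exact_mod_cast hs
          calc (n : ℝ) * k * (2 * (1 / (n : ℝ) ^ 4)) ≤ n * n * (2 * (1 / (n : ℝ) ^ 4)) := by gcongr
            _ = 2 / (n : ℝ) ^ 2 := by field_simp
            _ ≤ 2 / 16 ^ 2 := by gcongr
            _ ≤ 1 / 100 := by norm_num

/-! ### Conclusion -/

/-- **Truncation after random rotation yields an incoherent well-aligned basis.**
`A = M + N` symmetric, `M = U Λ_U Uᵀ` of rank `k`, `N = (I−UUᵀ)A = V Λ_V Vᵀ`;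
`W` orthonormal with `‖Vᵀ W‖ ≤ 1/(16√k)`; `O` Haar-random orthogonal; `T` the entrywise
truncation of `WO` to `[−μ', μ']` with `μ' = √(8 μ(U) log(n)/n)`; `X O` the orthonormal
factor of a QR factorization of `T`.  Then with probability at least `99/100`,
`‖Vᵀ X‖_F ≤ 1/4` and `μ(X) ≤ 32 μ(U) log n`. -/
theorem truncated_rotation_initialization
    {n k : ℕ} (hn : 2 ≤ n) (hk : 1 ≤ k) (hkn : k ≤ n)
    (A M N : Matrix (Fin n) (Fin n) ℝ)
    (U : Matrix (Fin n) (Fin k) ℝ) (V : Matrix (Fin n) (Fin (n - k)) ℝ)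
    (dU : Fin k → ℝ) (dV : Fin (n - k) → ℝ)
    (hA : Aᵀ = A) (hU : Uᵀ * U = 1) (hV : Vᵀ * V = 1) (hUV : Uᵀ * V = 0)
    (hfull : U * Uᵀ + V * Vᵀ = 1)
    (hM : M = U * Matrix.diagonal dU * Uᵀ) (hMrank : M.rank = k)
    (hN : N = (1 - U * Uᵀ) * A) (hNV : N = V * Matrix.diagonal dV * Vᵀ)
    (hMN : A = M + N)
    (W : Matrix (Fin n) (Fin k) ℝ) (hW : Wᵀ * W = 1)
    (hWV : specNorm (Vᵀ * W) ≤ 1/(16 * Real.sqrt k))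
    (ν : Measure (Matrix (Fin k) (Fin k) ℝ)) (hν : IsHaarOrthogonal ν)
    (X : Matrix (Fin k) (Fin k) ℝ → Matrix (Fin n) (Fin k) ℝ)
    (hX : ∀ O : Matrix (Fin k) (Fin k) ℝ, Oᵀ * O = 1 →
      (X O)ᵀ * X O = 1 ∧
      ∃ R : Matrix (Fin k) (Fin k) ℝ,
        (∀ i j : Fin k, (j : ℕ) < (i : ℕ) → R i j = 0) ∧
        truncate (Real.sqrt (8 * coher U * Real.log n / n)) (W * O) = X O * R) :
    ENNReal.ofReal (99/100) ≤
      ν {O | frobNorm (Vᵀ * X O) ≤ 1/4 ∧ coher (X O) ≤ 32 * coher U * Real.log n} := by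
  have := hν.prob
  have hn0 : (0 : ℝ) < n := by positivity
  have hμ := coher_pos hk hn hU
  have hlog : 0 ≤ Real.log n := Real.log_nonneg (by exact_mod_cast (by omega : 1 ≤ n))
  set c := Real.sqrt (8 * coher U * Real.log n / n) with hcdef
  have hc : 0 ≤ c := Real.sqrt_nonneg _
  have hc2 : c ^ 2 = 8 * coher U * Real.log n / n := Real.sq_sqrt (by positivity)
  set S := {O | frobNorm (Vᵀ * X O) ≤ 1/4 ∧ coher (X O) ≤ 32 * coher U * Real.log n} with hS
  have hbad := box_event hn hk hkn hν (U * (Uᵀ * W)) (v := coher U / n) (c := c) (by positivity) hc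
    (by rw [hc2]; ring) fun i => (row_proj_le hU hW i).trans (le_coher hk hn U i)
  set E := {O : Matrix (Fin k) (Fin k) ℝ | ∃ i j, c < |(U * (Uᵀ * W) * O) i j|} with hE
  have hcover : (Set.univ : Set (Matrix (Fin k) (Fin k) ℝ)) ⊆
      S ∪ (E ∪ {O | ¬ Oᵀ * O = 1}) := by
    intro O _
    by_cases hO : Oᵀ * O = 1
    · by_cases hOE : O ∈ E
      · exact Or.inr (Or.inl hOE)
      · left
        have hbox : ∀ i j, |(U * (Uᵀ * W) * O) i j| ≤ c := fun i j =>
          not_lt.mp fun h => hOE ⟨i, j, h⟩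
        obtain ⟨hXO, R, -, hT⟩ := hX O hO
        obtain ⟨h1, h2⟩ := deterministic_part hn hk hV hUV hfull hW hWV hO hc hbox hXO hT
        refine ⟨h1, h2.trans_eq ?_⟩
        rw [hc2]; field_simp; ring
    · exact Or.inr (Or.inr hO)
  -- `S` need not be measurable since `X` is arbitrary, so only subadditivity is used.
  have hle : 1 ≤ ν S + ENNReal.ofReal (1 / 100) := by
    calc (1 : ENNReal) = ν Set.univ := measure_univ.symm
      _ ≤ ν S + (ν E + ν {O | ¬ Oᵀ * O = 1}) := (measure_mono hcover).trans
          ((measure_union_le _ _).trans (add_le_add le_rfl (measure_union_le _ _)))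
      _ = ν S + ν E := by rw [show ν {O | ¬ Oᵀ * O = 1} = 0 from hν.orth, add_zero]
      _ ≤ _ := by gcongr
  have h1 : (1 : ENNReal) = ENNReal.ofReal (99/100) + ENNReal.ofReal (1/100) := by
    rw [← ENNReal.ofReal_add (by norm_num) (by norm_num)]; norm_num
  rw [h1] at hle
  exact (ENNReal.add_le_add_iff_right ENNReal.ofReal_ne_top).mp hle
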